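/- arXiv:1308.5849 — 2 statements merged into one kernel-verified Lean document; each statement's English description precedes it below -/
import Mathlib

section
/- Let 𝓗 be a collection of nine pairwise distinct sets whose union has exactly four elements (equivalently, nine distinct subsets of a four-element set). Then at least one of the 3-singleton matrix S³, the 3-cosingleton matrix S̄³, and the 3-monotone matrix M³ can be found in 𝓗. -/
/-- A 0-1 matrix `N` (given as a `Prop`-valued matrix, `N i j` meaning entry 1)
with rows indexed by `Fin a` and columns by `Fin b` *can be found* in a collection
of sets `𝓗` if there are `a` distinct sets of `𝓗` and `b` distinct elements of
`⋃₀ 𝓗` such that `N` is the incidence matrix of the sets over the elements. -/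
def FoundIn {α : Type*} {a b : ℕ} (N : Fin a → Fin b → Prop) (𝓗 : Set (Set α)) : Prop :=
  ∃ (H : Fin a → Set α) (e : Fin b → α),
    Function.Injective H ∧ Function.Injective e ∧
    (∀ i, H i ∈ 𝓗) ∧ (∀ j, e j ∈ ⋃₀ 𝓗) ∧
    (∀ i j, e j ∈ H i ↔ N i j)

/-- The `n`-singleton matrix `Sⁿ`: `n+1` rows, `n` columns, entry 1 iff `i = j+1`. -/
def singletonMatrix (n : ℕ) : Fin (n + 1) → Fin n → Prop :=
  fun i j => (i : ℕ) = (j : ℕ) + 1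

/-- The `n`-cosingleton matrix `S̄ⁿ`: `n+1` rows, `n` columns, entry 0 iff `i = j`. -/
def cosingletonMatrix (n : ℕ) : Fin (n + 1) → Fin n → Prop :=
  fun i j => (i : ℕ) ≠ (j : ℕ)

/-- The `n`-monotone matrix `Mⁿ`: `n+1` rows, `n` columns, entry 1 iff `i ≥ j+1`. -/
def monotoneMatrix (n : ℕ) : Fin (n + 1) → Fin n → Prop :=
  fun i j => (j : ℕ) + 1 ≤ (i : ℕ)

namespace NineSets

/-- For each placement of one of the three matrices on three of four elements: for each row,
the bit mask of those subsets of the four elements (coded by numbers below 16) with that trace. -/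
def pats : List (List ℕ) :=
  [[257, 514, 1028, 4112],
   [17, 34, 68, 4352],
   [5, 10, 80, 1280],
   [3, 12, 48, 768],
   [16448, 8224, 2056, 32896],
   [17408, 8704, 136, 34816],
   [20480, 2560, 160, 40960],
   [12288, 3072, 192, 49152],
   [257, 514, 2056, 32896],
   [17, 34, 136, 34816],
   [257, 514, 8224, 32896],
   [5, 10, 160, 40960],
   [17, 34, 8704, 34816],
   [5, 10, 2560, 40960],
   [257, 1028, 2056, 32896],
   [17, 68, 136, 34816],
   [257, 1028, 16448, 32896],
   [3, 12, 192, 49152],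
   [17, 68, 17408, 34816],
   [3, 12, 3072, 49152],
   [257, 4112, 8224, 32896],
   [5, 80, 160, 40960],
   [257, 4112, 16448, 32896],
   [3, 48, 192, 49152],
   [5, 80, 20480, 40960],
   [3, 48, 12288, 49152],
   [17, 4352, 8704, 34816],
   [5, 1280, 2560, 40960],
   [17, 4352, 17408, 34816],
   [3, 768, 3072, 49152],
   [5, 1280, 20480, 40960],
   [3, 768, 12288, 49152]]

/-- Some placement has all its rows realised among the codes in `inc`. -/
def found (inc : ℕ) : Bool :=
  pats.any fun p => p.all fun m => !(Nat.beq (Nat.land inc m) 0)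

/-- Exhaustive search over families with at most 7 of the 16 codes missing. -/
def search : ℕ → ℕ → ℕ → Bool
  | 0, inc, c => Nat.ble 8 c || found inc
  | k + 1, inc, c => Nat.ble 8 c || (found inc ||
      (search k (Nat.lor inc (2 ^ k)) c && search k inc (c + 1)))

theorem search_ok : search 16 0 0 = true := by decide +kernel

/-- Boolean form of the three matrices. -/
def mat (k : Fin 3) (r : Fin 4) (j : Fin 3) : Bool :=
  if k = 0 then decide ((r : ℕ) = (j : ℕ) + 1)
  else if k = 1 then decide ((r : ℕ) ≠ (j : ℕ))
  else decide ((j : ℕ) + 1 ≤ (r : ℕ))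

theorem pats_ok : ∀ p ∈ pats, ∃ k : Fin 3, ∃ a b c : Fin 4, (a ≠ b ∧ a ≠ c ∧ b ≠ c) ∧
    ∀ r : Fin 4, ∃ m ∈ p, ∀ i < 16, m.testBit i = true →
      ∀ j : Fin 3, i.testBit (![a, b, c] j : Fin 4) = mat k r j := by
  decide +kernel

theorem pats_lt : ∀ p ∈ pats, ∀ m ∈ p, m < 2 ^ 16 := by decide +kernel

theorem found_sound (P : ℕ → Prop) (inc : ℕ) (h : found inc = true)
    (hinc : ∀ i, inc.testBit i = true → P i) :
    ∃ p ∈ pats, ∀ m ∈ p, ∃ i < 16, m.testBit i = true ∧ P i := by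
  simp only [found, List.any_eq_true, List.all_eq_true] at h
  obtain ⟨p, hp, hm⟩ := h
  refine ⟨p, hp, fun m hmp => ?_⟩
  have h1 := hm m hmp
  have h2 : inc &&& m ≠ 0 := by
    intro h0
    have h0' : Nat.land inc m = 0 := h0
    rw [h0'] at h1
    exact absurd h1 (by decide)
  obtain ⟨i, hi⟩ := Nat.exists_testBit_of_ne_zero h2
  rw [Nat.testBit_land, Bool.and_eq_true] at hi
  refine ⟨i, ?_, hi.2, hinc i hi.1⟩
  by_contra hlt
  have := Nat.testBit_lt_two_pow (lt_of_lt_of_le (pats_lt p hp m hmp)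
    (Nat.pow_le_pow_right (by norm_num) (not_lt.mp hlt)))
  simp [this] at hi

open Classical in
theorem search_sound (P : ℕ → Prop) : ∀ (k inc c : ℕ), search k inc c = true →
    (∀ i, inc.testBit i = true → P i) →
    c + ((Finset.range k).filter fun i => ¬ P i).card ≤ 7 →
    ∃ p ∈ pats, ∀ m ∈ p, ∃ i < 16, m.testBit i = true ∧ P i := by
  intro k
  induction k with
  | zero =>
    intro inc c h hinc hc
    simp only [search, Bool.or_eq_true] at h
    rcases h with h | h
    · have := Nat.le_of_ble_eq_true h
      omega
    · exact found_sound P inc h hinc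
  | succ k ih =>
    intro inc c h hinc hc
    simp only [search, Bool.or_eq_true, Bool.and_eq_true] at h
    rcases h with h | h | ⟨h1, h2⟩
    · have := Nat.le_of_ble_eq_true h
      omega
    · exact found_sound P inc h hinc
    · rw [Finset.range_add_one, Finset.filter_insert] at hc
      by_cases hk : P k
      · refine ih _ _ h1 ?_ (by simpa [hk] using hc)
        intro i hi
        have hi' : (inc ||| 2 ^ k).testBit i = true := hi
        rw [Nat.testBit_lor, Bool.or_eq_true] at hi'
        rcases hi' with hi' | hi'
        · exact hinc i hi'
        · rw [Nat.testBit_two_pow] at hi'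
          have : k = i := by simpa using hi'
          exact this ▸ hk
      · refine ih _ _ h2 hinc ?_
        rw [if_pos hk, Finset.card_insert_of_notMem (by simp)] at hc
        omega

theorem code_exists : ∀ q0 q1 q2 q3 : Bool, ∃ i < 16,
    ∀ j : Fin 4, i.testBit j = ![q0, q1, q2, q3] j := by decide +kernel

theorem mat_inj : ∀ k : Fin 3, ∀ r s : Fin 4, (∀ j, mat k r j = mat k s j) → r = s := by
  decide +kernel

end NineSets

/-- **Lemma.** In any collection of nine pairwise distinct sets whose union has
exactly four elements, one of `S³`, `S̄³`, `M³` can be found. -/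
theorem nine_sets_four_elements {α : Type*} (𝓗 : Finset (Set α))
    (hcard : 𝓗.card = 9) (hunion : (⋃₀ (↑𝓗 : Set (Set α))).encard = 4) :
    FoundIn (singletonMatrix 3) (↑𝓗 : Set (Set α)) ∨
    FoundIn (cosingletonMatrix 3) (↑𝓗 : Set (Set α)) ∨
    FoundIn (monotoneMatrix 3) (↑𝓗 : Set (Set α)) := by
  classical
  obtain ⟨g, hg, hgr⟩ : ∃ g : Fin 4 → α, Function.Injective g ∧
      Set.range g = ⋃₀ (↑𝓗 : Set (Set α)) := by
    have hfin : (⋃₀ (↑𝓗 : Set (Set α))).Finite := Set.finite_of_encard_eq_coe hunion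
    have hn : Nat.card (⋃₀ (↑𝓗 : Set (Set α))) = 4 := by
      rw [Nat.card_coe_set_eq, Set.ncard, hunion]
      rfl
    have := hfin.to_subtype
    let e := (Finite.equivFinOfCardEq hn).symm
    refine ⟨fun i => (e i : α), fun x y h => e.injective (Subtype.ext h), ?_⟩
    ext x
    constructor
    · rintro ⟨i, rfl⟩
      exact (e i).2
    · intro hx
      exact ⟨e.symm ⟨x, hx⟩, by simp⟩
  let D : ℕ → Set α := fun i => {x | ∃ j : Fin 4, i.testBit j = true ∧ g j = x}
  have hD : ∀ i (j : Fin 4), g j ∈ D i ↔ i.testBit j = true := by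
    intro i j
    constructor
    · rintro ⟨j', h, hj⟩
      exact hg hj ▸ h
    · intro h
      exact ⟨j, h, rfl⟩
  have hsub : 𝓗 ⊆ ((Finset.range 16).filter fun i => D i ∈ 𝓗).image D := by
    intro H hH
    obtain ⟨i, hi, hij⟩ := NineSets.code_exists (decide (g 0 ∈ H)) (decide (g 1 ∈ H))
      (decide (g 2 ∈ H)) (decide (g 3 ∈ H))
    have hij' : ∀ j : Fin 4, i.testBit j = true ↔ g j ∈ H := by
      intro j
      rw [hij j]
      fin_cases j <;> simp
    have hDH : D i = H := by
      ext x
      constructor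
      · rintro ⟨j, h, rfl⟩
        exact (hij' j).1 h
      · intro hx
        have : x ∈ Set.range g := hgr ▸ Set.mem_sUnion_of_mem hx hH
        obtain ⟨j, rfl⟩ := this
        exact ⟨j, (hij' j).2 hx, rfl⟩
    exact Finset.mem_image.2 ⟨i, Finset.mem_filter.2 ⟨Finset.mem_range.2 hi, hDH ▸ hH⟩, hDH⟩
  have h9 := (Finset.card_le_card hsub).trans Finset.card_image_le
  have hsum := Finset.card_filter_add_card_filter_not (s := Finset.range 16) (fun i => D i ∈ 𝓗)
  rw [Finset.card_range] at hsum
  obtain ⟨p, hp, hpm⟩ := NineSets.search_sound (fun i => D i ∈ 𝓗) 16 0 0 NineSets.search_ok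
    (by simp) (by
      have h7 : ((Finset.range 16).filter fun i => ¬ D i ∈ 𝓗).card ≤ 7 := by omega
      rw [Nat.zero_add]
      convert h7)
  obtain ⟨k, a, b, c, ⟨hab, hac, hbc⟩, hr⟩ := NineSets.pats_ok p hp
  have hrow : ∀ r : Fin 4, ∃ i, D i ∈ 𝓗 ∧
      ∀ j : Fin 3, i.testBit (![a, b, c] j : Fin 4) = NineSets.mat k r j := by
    intro r
    obtain ⟨m, hm, h⟩ := hr r
    obtain ⟨i, hi, hb, hP⟩ := hpm m hm
    exact ⟨i, hP, h i hi hb⟩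
  choose f hf hfm using hrow
  have key : FoundIn (fun r j => NineSets.mat k r j = true) (↑𝓗 : Set (Set α)) := by
    refine ⟨fun r => D (f r), fun j => g (![a, b, c] j), ?_, ?_, hf, ?_, ?_⟩
    · intro r s hrs
      apply NineSets.mat_inj k
      intro j
      have hrs' : D (f r) = D (f s) := hrs
      rw [← hfm, ← hfm, Bool.eq_iff_iff, ← hD, ← hD, hrs']
    · intro x y hxy
      have h := hg hxy
      fin_cases x <;> fin_cases y <;> simp [hab, hac, hbc, hab.symm, hac.symm, hbc.symm] at h ⊢
    · intro j
      rw [← hgr]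
      exact ⟨_, rfl⟩
    · intro r j
      rw [hD, hfm]
  fin_cases k
  · left
    convert key using 3
    simp [singletonMatrix, NineSets.mat]
  · right; left
    convert key using 3
    simp [cosingletonMatrix, NineSets.mat]
  · right; right
    convert key using 3
    simp [monotoneMatrix, NineSets.mat]
end

section
/- Let 𝓗 be a reduced collection of pairwise distinct sets whose union has at least five elements. Suppose the 3×4 matrix with rows 0000, 1000, 0100 can be found in 𝓗, i.e. there exist sets H₁, H₂, H₃ in 𝓗 and four distinct elements e₁, e₂, e₃, e₄ of ⋃𝓗 such that H₁ ∩ {e₁,e₂,e₃,e₄} = ∅, H₂ ∩ {e₁,e₂,e₃,e₄} = {e₁}, and H₃ ∩ {e₁,e₂,e₃,e₄} = {e₂}. Then at least one of the 3-singleton matrix S³, the 3-cosingleton matrix S̄³, and the 3-monotone matrix M³ can be found in 𝓗. -/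
/-- A collection of sets is *reduced* if every element of the union is useful to
make the sets distinct: for every `x ∈ ⋃₀ 𝓗` there are two distinct sets `A ≠ B`
of `𝓗` with `A \ {x} = B \ {x}`. -/
def Reduced {α : Type*} (𝓗 : Set (Set α)) : Prop :=
  ∀ x ∈ ⋃₀ 𝓗, ∃ A ∈ 𝓗, ∃ B ∈ 𝓗, A ≠ B ∧ A \ {x} = B \ {x}

/-- Some code in `L` has bits `a b c` at positions `i j k`. -/
def rowIn (L : List ℕ) (i j k : Fin 5) (a b c : Bool) : Bool :=
  L.any fun s => s.testBit i.val == a && (s.testBit j.val == b && s.testBit k.val == c)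

/-- One of the three matrices is visible on the columns `i j k`. -/
def goodAt (L : List ℕ) (i j k : Fin 5) : Bool :=
  (rowIn L i j k false false false &&
    (rowIn L i j k true false false &&
      ((rowIn L i j k false true false && rowIn L i j k false false true) ||
       (rowIn L i j k true true false && rowIn L i j k true true true)))) ||
  (rowIn L i j k false true true && (rowIn L i j k true false true &&
    (rowIn L i j k true true false && rowIn L i j k true true true)))

def cols : List (Fin 5) := [0, 1, 2, 3, 4]

def goodList (L : List ℕ) : Bool :=
  cols.any fun i => cols.any fun j => cols.any fun k =>
    (i.val != j.val && (i.val != k.val && j.val != k.val)) && goodAt L i j k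

/-- Branch over all edges in the given directions. -/
def search : List (Fin 5) → List ℕ → Bool
  | [], L => goodList L
  | d :: ds, L => goodList L ||
      (List.range 32).all fun a => a.testBit d.val || search ds (a :: (a ||| 2 ^ d.val) :: L)

theorem search_true : ∀ x y z : Bool,
    search [2, 3, 4, 0, 1] [16 * x.toNat, 1 + 16 * y.toNat, 2 + 16 * z.toNat] = true := by
  decide +kernel

/-- The code `s` is the trace of some member of the family. -/
def Tr {α : Type*} (𝓗 : Set (Set α)) (e : Fin 5 → α) (s : ℕ) : Prop :=
  ∃ H ∈ 𝓗, ∀ i, e i ∈ H ↔ s.testBit i.val = true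

def Goal3 {α : Type*} (𝓗 : Set (Set α)) : Prop :=
  FoundIn (singletonMatrix 3) 𝓗 ∨ FoundIn (cosingletonMatrix 3) 𝓗 ∨
    FoundIn (monotoneMatrix 3) 𝓗

theorem rowIn_sound {α : Type*} {𝓗 : Set (Set α)} {e : Fin 5 → α} {L : List ℕ}
    (hL : ∀ s ∈ L, Tr 𝓗 e s) {i j k : Fin 5} {a b c : Bool} (h : rowIn L i j k a b c = true) :
    ∃ H ∈ 𝓗, (e i ∈ H ↔ a = true) ∧ (e j ∈ H ↔ b = true) ∧ (e k ∈ H ↔ c = true) := by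
  simp only [rowIn, List.any_eq_true, Bool.and_eq_true, beq_iff_eq] at h
  obtain ⟨s, hs, h1, h2, h3⟩ := h
  obtain ⟨H, hH, hi⟩ := hL s hs
  exact ⟨H, hH, by rw [hi, h1], by rw [hi, h2], by rw [hi, h3]⟩

theorem found_of {α : Type*} {𝓗 : Set (Set α)} {e : Fin 5 → α} (he : Function.Injective e)
    (hU : ∀ i, e i ∈ ⋃₀ 𝓗) {i j k : Fin 5} (hij : i ≠ j) (hik : i ≠ k) (hjk : j ≠ k)
    (N : Fin 4 → Fin 3 → Prop) (hN : ∀ p q, (∀ c, N p c ↔ N q c) → p = q)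
    (h : ∀ r, ∃ H ∈ 𝓗, (e i ∈ H ↔ N r 0) ∧ (e j ∈ H ↔ N r 1) ∧ (e k ∈ H ↔ N r 2)) :
    FoundIn N 𝓗 := by
  choose H hH h0 h1 h2 using h
  have key : ∀ r c, (e (![i, j, k] c) ∈ H r ↔ N r c) := by
    intro r c
    fin_cases c
    · exact h0 r
    · exact h1 r
    · exact h2 r
  refine ⟨H, fun c => e (![i, j, k] c), ?_, ?_, hH, fun c => hU _, key⟩
  · intro p q hpq
    apply hN
    intro c
    rw [← key, ← key, hpq]
  · intro p q hpq
    have := he hpq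
    fin_cases p <;> fin_cases q <;> simp_all

theorem good_sound {α : Type*} {𝓗 : Set (Set α)} {e : Fin 5 → α} (he : Function.Injective e)
    (hU : ∀ i, e i ∈ ⋃₀ 𝓗) {L : List ℕ}
    (hL : ∀ s ∈ L, Tr 𝓗 e s) (h : goodList L = true) : Goal3 𝓗 := by
  simp only [goodList, List.any_eq_true, Bool.and_eq_true, bne_iff_ne, ne_eq, Fin.val_inj] at h
  obtain ⟨i, -, j, -, k, -, ⟨hij, hik, hjk⟩, h⟩ := h
  simp only [goodAt, Bool.or_eq_true, Bool.and_eq_true] at h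
  have R := fun {a b c} h => rowIn_sound (e := e) hL (i := i) (j := j) (k := k)
    (a := a) (b := b) (c := c) h
  rcases h with ⟨h1, h2, ⟨h3, h4⟩ | ⟨h3, h4⟩⟩ | ⟨h1, h2, h3, h4⟩
  · refine Or.inl (found_of he hU hij hik hjk _ (by unfold singletonMatrix; decide) ?_)
    intro r
    fin_cases r
    · simpa [singletonMatrix] using R h1
    · simpa [singletonMatrix] using R h2
    · simpa [singletonMatrix] using R h3
    · simpa [singletonMatrix] using R h4
  · refine Or.inr (Or.inr (found_of he hU hij hik hjk _ (by unfold monotoneMatrix; decide) ?_))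
    intro r
    fin_cases r
    · simpa [monotoneMatrix] using R h1
    · simpa [monotoneMatrix] using R h2
    · simpa [monotoneMatrix] using R h3
    · simpa [monotoneMatrix] using R h4
  · refine Or.inr (Or.inl (found_of he hU hij hik hjk _ (by unfold cosingletonMatrix; decide) ?_))
    intro r
    fin_cases r
    · simpa [cosingletonMatrix] using R h1
    · simpa [cosingletonMatrix] using R h2
    · simpa [cosingletonMatrix] using R h3
    · simpa [cosingletonMatrix] using R h4

theorem code_exists : ∀ b0 b1 b2 b3 b4 : Bool, ∃ a ∈ List.range 32,
    a.testBit 0 = b0 ∧ a.testBit 1 = b1 ∧ a.testBit 2 = b2 ∧ a.testBit 3 = b3 ∧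
      a.testBit 4 = b4 := by
  decide +kernel

theorem edge_exists {α : Type*} {𝓗 : Set (Set α)} (hred : Reduced 𝓗) {e : Fin 5 → α}
    (he : Function.Injective e) (hU : ∀ i, e i ∈ ⋃₀ 𝓗) (d : Fin 5) :
    ∃ a ∈ List.range 32, a.testBit d.val = false ∧ Tr 𝓗 e a ∧ Tr 𝓗 e (a ||| 2 ^ d.val) := by
  classical
  have main : ∃ A ∈ 𝓗, ∃ B ∈ 𝓗, e d ∉ A ∧ e d ∈ B ∧ ∀ y, y ≠ e d → (y ∈ A ↔ y ∈ B) := by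
    obtain ⟨A, hA, B, hB, hne, hAB⟩ := hred _ (hU d)
    have hy : ∀ y, y ≠ e d → (y ∈ A ↔ y ∈ B) := by
      intro y hy
      have := Set.ext_iff.1 hAB y
      simpa [hy] using this
    by_cases h1 : e d ∈ A <;> by_cases h2 : e d ∈ B
    · exact absurd (Set.ext fun y => by by_cases h : y = e d <;> simp_all) hne
    · exact ⟨B, hB, A, hA, h2, h1, fun y h => (hy y h).symm⟩
    · exact ⟨A, hA, B, hB, h1, h2, hy⟩
    · exact absurd (Set.ext fun y => by by_cases h : y = e d <;> simp_all) hne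
  obtain ⟨A, hA, B, hB, h1, h2, hy⟩ := main
  obtain ⟨a, ha, t0, t1, t2, t3, t4⟩ := code_exists (decide (e 0 ∈ A)) (decide (e 1 ∈ A))
    (decide (e 2 ∈ A)) (decide (e 3 ∈ A)) (decide (e 4 ∈ A))
  have t : ∀ i : Fin 5, a.testBit i.val = decide (e i ∈ A) := by
    intro i
    fin_cases i
    · exact t0
    · exact t1
    · exact t2
    · exact t3
    · exact t4
  refine ⟨a, ha, by simp [t, h1], ⟨A, hA, fun i => by simp [t]⟩, ⟨B, hB, fun i => ?_⟩⟩
  rw [Nat.testBit_or, t, Nat.testBit_two_pow]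
  by_cases hi : i = d
  · subst hi; simp [h2]
  · have h3 : ¬ d.val = i.val := fun h => hi (Fin.ext h.symm)
    rw [← hy _ (fun h => hi (he h))]
    simp [h3]

theorem search_sound {α : Type*} {𝓗 : Set (Set α)} (hred : Reduced 𝓗) {e : Fin 5 → α}
    (he : Function.Injective e) (hU : ∀ i, e i ∈ ⋃₀ 𝓗) (ds : List (Fin 5)) :
    ∀ L : List ℕ, (∀ s ∈ L, Tr 𝓗 e s) → search ds L = true → Goal3 𝓗 := by
  induction ds with
  | nil => exact fun L hL h => good_sound he hU hL h
  | cons d ds ih =>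
    intro L hL h
    rw [search, Bool.or_eq_true] at h
    rcases h with h | h
    · exact good_sound he hU hL h
    · rw [List.all_eq_true] at h
      obtain ⟨a, ha, hd, hT1, hT2⟩ := edge_exists hred he hU d
      have h' := h a ha
      rw [hd, Bool.false_or] at h'
      refine ih _ ?_ h'
      intro s hs
      simp only [List.mem_cons] at hs
      rcases hs with rfl | rfl | hs
      · exact hT1
      · exact hT2
      · exact hL s hs


/-- **Lemma.** If `𝓗` is reduced, its union has at least five elements, and the
`3 × 4` matrix with rows `0000`, `1000`, `0100` can be found in `𝓗`, then one of
`S³`, `S̄³`, `M³` can be found in `𝓗`. -/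
theorem reduced_0000_1000_0100 {α : Type*} (𝓗 : Set (Set α)) (hred : Reduced 𝓗)
    (hbig : 5 ≤ (⋃₀ 𝓗).encard)
    (h : FoundIn (fun (i : Fin 3) (j : Fin 4) => (i : ℕ) = (j : ℕ) + 1) 𝓗) :
    FoundIn (singletonMatrix 3) 𝓗 ∨ FoundIn (cosingletonMatrix 3) 𝓗 ∨
    FoundIn (monotoneMatrix 3) 𝓗 := by
  classical
  obtain ⟨H, f, -, hf, hH, hfU, hinc⟩ := h
  have hx : ∃ x ∈ ⋃₀ 𝓗, x ∉ Set.range f := by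
    by_contra hcon
    push Not at hcon
    have h1 : (⋃₀ 𝓗).encard ≤ (Set.range f).encard := Set.encard_le_encard hcon
    have h2 : (Set.range f).encard = 4 := by
      rw [← Set.image_univ, hf.encard_image]; simp
    rw [h2] at h1
    exact absurd (hbig.trans h1) (by decide)
  obtain ⟨x, hxU, hxf⟩ := hx
  have he : Function.Injective (![f 0, f 1, f 2, f 3, x] : Fin 5 → α) := by
    have hne : ∀ i, f i ≠ x := fun i hi => hxf ⟨i, hi⟩
    intro p q hpq
    fin_cases p <;> fin_cases q <;>
      simp [hf.eq_iff, hne, fun i => (hne i).symm] at hpq ⊢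
  have hU : ∀ i, (![f 0, f 1, f 2, f 3, x] : Fin 5 → α) i ∈ ⋃₀ 𝓗 := by
    intro i
    fin_cases i
    · exact hfU 0
    · exact hfU 1
    · exact hfU 2
    · exact hfU 3
    · exact hxU
  refine search_sound hred he hU [2, 3, 4, 0, 1] _ ?_
    (search_true (decide (x ∈ H 0)) (decide (x ∈ H 1)) (decide (x ∈ H 2)))
  intro s hs
  simp only [List.mem_cons, List.not_mem_nil, or_false] at hs
  rcases hs with rfl | rfl | rfl
  · refine ⟨H 0, hH 0, fun i => ?_⟩
    by_cases hm : x ∈ H 0 <;> fin_cases i <;> simp [hinc, hm, Nat.testBit]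
  · refine ⟨H 1, hH 1, fun i => ?_⟩
    by_cases hm : x ∈ H 1 <;> fin_cases i <;> simp [hinc, hm, Nat.testBit]
  · refine ⟨H 2, hH 2, fun i => ?_⟩
    by_cases hm : x ∈ H 2 <;> fin_cases i <;> simp [hinc, hm, Nat.testBit]
end
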